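/- Let q be a complex number with 0 < |q| < 1, and define f^2_{m,l}(q) := q^{(m−l)^2} (q;q)_l / ((q;q)_{m−l} (q;q)_{2l−m}) for integers m, l, with the convention 1/(q;q)_a := 0 whenever a < 0 (so in particular f^2_{m,l}(q) = 0 unless l ≤ m ≤ 2l). Then for all integers m, l with l < m < 2l, the recursion f^2_{m,l}(q) = q^l · f^2_{m−1,l}(q) + f^2_{m−1,l−1}(q) − q^{2m−l−3} · f^2_{m−3,l−1}(q) holds. -/

import Mathlib

/-!
In the coordinates `a = m - l` and `b = 2 l - m` one has `l = a + b`, and up to the factor `(q;q)_l`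
the four terms of the recursion sit at `(a, b)`, `(a - 1, b + 1)`, `(a, b - 1)` and
`(a - 2, b + 1)`. The rule `1/(q;q)_{n-1} = (1 - q^n) / (q;q)_n` holds for every integer `n`, the
convention `1/(q;q)_n = 0` for `n < 0` matching the vanishing of `1 - q^0`, so each term is an
explicit multiple of `q^{a²} / ((q;q)_a (q;q)_{b+1})` without any boundary cases. Cancelling this
factor leaves the identity
`(1 - q^{a+b}) (1 - q^{b+1}) = c (1 - q^{a+b}) (1 - q^a) + (1 - q^b) (1 - q^{b+1})
  - c (1 - q^{a-1}) (1 - q^a)` with `c = q^{b+1-a}`.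
-/

open Finset

/-- Finite q-Pochhammer symbol `(a;q)_n`. -/
noncomputable def qPoch (a q : ℂ) (n : ℕ) : ℂ := ∏ j ∈ Finset.range n, (1 - a * q ^ j)

/-- `1/(q;q)_a` with the convention that it is `0` for `a < 0`. -/
noncomputable def qFactInv (q : ℂ) (a : ℤ) : ℂ :=
  if 0 ≤ a then (qPoch q q a.toNat)⁻¹ else 0

/-- `f²_{m,l}(q) := q^{(m−l)²} (q;q)_l / ((q;q)_{m−l} (q;q)_{2l−m})`, with the convention
    `1/(q;q)_a = 0` for `a < 0` (so it vanishes unless `l ≤ m ≤ 2l`). -/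
noncomputable def f2 (q : ℂ) (m l : ℤ) : ℂ :=
  q ^ ((m - l) ^ 2) * qPoch q q l.toNat * qFactInv q (m - l) * qFactInv q (2 * l - m)

theorem qPoch_succ (a q : ℂ) (n : ℕ) : qPoch a q (n + 1) = qPoch a q n * (1 - a * q ^ n) :=
  Finset.prod_range_succ _ n

theorem qPoch_self_toNat (q : ℂ) {l : ℤ} (hl : 0 < l) :
    qPoch q q l.toNat = (1 - q ^ l) * qPoch q q (l - 1).toNat := by
  obtain ⟨n, rfl⟩ : ∃ n : ℕ, l = n + 1 := ⟨(l - 1).toNat, by lia⟩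
  rw [add_sub_cancel_right, Int.toNat_natCast, Int.toNat_natCast_add_one, qPoch_succ, ← pow_succ',
    mul_comm, ← Nat.cast_succ, zpow_natCast]

theorem qFactInv_of_neg (q : ℂ) {n : ℤ} (hn : n < 0) : qFactInv q n = 0 :=
  if_neg hn.not_ge

theorem qFactInv_of_nonneg (q : ℂ) {n : ℤ} (hn : 0 ≤ n) :
    qFactInv q n = (qPoch q q n.toNat)⁻¹ :=
  if_pos hn

theorem one_sub_zpow_ne_zero {K : Type*} [DivisionRing K] {q : K} (hq : ¬IsOfFinOrder q) {n : ℤ}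
    (hn : n ≠ 0) : 1 - q ^ n ≠ 0 := fun h =>
  hq (isOfFinOrder_iff_zpow_eq_one.mpr ⟨n, hn, (sub_eq_zero.mp h).symm⟩)

theorem qFactInv_sub_one {q : ℂ} (hq : ¬IsOfFinOrder q) (n : ℤ) :
    qFactInv q (n - 1) = (1 - q ^ n) * qFactInv q n := by
  rcases lt_trichotomy n 0 with hn | rfl | hn
  · rw [qFactInv_of_neg q hn, qFactInv_of_neg q (by lia), mul_zero]
  · rw [qFactInv_of_neg q (by lia), zpow_zero, sub_self, zero_mul]
  · rw [qFactInv_of_nonneg q hn.le, qFactInv_of_nonneg q (by lia), qPoch_self_toNat q hn, mul_inv,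
      mul_inv_cancel_left₀ (one_sub_zpow_ne_zero hq hn.ne')]

/-- The function `f²_{m,l}` without its factor `(q;q)_l`, in the coordinates `a = m - l` and
`b = 2 l - m`. -/
noncomputable def f2Kernel (q : ℂ) (a b : ℤ) : ℂ :=
  q ^ (a ^ 2) * qFactInv q a * qFactInv q b

theorem f2_eq_qPoch_mul_f2Kernel (q : ℂ) (m l : ℤ) :
    f2 q m l = qPoch q q l.toNat * f2Kernel q (m - l) (2 * l - m) := by
  rw [f2, f2Kernel]
  ring

theorem f2Kernel_sub_one_left {q : ℂ} (hq0 : q ≠ 0) (hq : ¬IsOfFinOrder q) (a b : ℤ) :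
    f2Kernel q (a - 1) b = q ^ (1 - 2 * a) * (1 - q ^ a) * f2Kernel q a b := by
  have hpow : q ^ ((a - 1) ^ 2) = q ^ (1 - 2 * a) * q ^ (a ^ 2) := by
    rw [← zpow_add₀ hq0]
    congr 1
    ring
  rw [f2Kernel, f2Kernel, hpow, qFactInv_sub_one hq]
  ring

theorem f2Kernel_sub_one_right {q : ℂ} (hq : ¬IsOfFinOrder q) (a b : ℤ) :
    f2Kernel q a (b - 1) = (1 - q ^ b) * f2Kernel q a b := by
  rw [f2Kernel, f2Kernel, qFactInv_sub_one hq]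
  ring

theorem one_sub_zpow_mul_one_sub_zpow {K : Type*} [Field K] {q : K} (hq0 : q ≠ 0) (a b : ℤ) :
    (1 - q ^ (a + b)) * (1 - q ^ (b + 1))
      = q ^ (b + 1 - a) * (1 - q ^ (a + b)) * (1 - q ^ a) + (1 - q ^ b) * (1 - q ^ (b + 1))
        - q ^ (b + 1 - a) * (1 - q ^ (a - 1)) * (1 - q ^ a) := by
  simp only [zpow_add₀ hq0, zpow_sub₀ hq0, zpow_one]
  have ha : q ^ a ≠ 0 := zpow_ne_zero a hq0
  field_simp
  ring

theorem f2Kernel_recursion {q : ℂ} (hq0 : q ≠ 0) (hq : ¬IsOfFinOrder q) (a b : ℤ) :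
    (1 - q ^ (a + b)) * f2Kernel q a b
      = q ^ (a + b) * ((1 - q ^ (a + b)) * f2Kernel q (a - 1) (b + 1)) + f2Kernel q a (b - 1)
        - q ^ (3 * a + b - 3) * f2Kernel q (a - 2) (b + 1) := by
  set G := f2Kernel q a (b + 1)
  have h_base : f2Kernel q a b = (1 - q ^ (b + 1)) * G := by
    rw [← f2Kernel_sub_one_right hq, add_sub_cancel_right]
  have h_left : q ^ (a + b) * f2Kernel q (a - 1) (b + 1)
      = q ^ (b + 1 - a) * (1 - q ^ a) * G := by
    rw [f2Kernel_sub_one_left hq0 hq, ← mul_assoc, ← mul_assoc, ← zpow_add₀ hq0,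
      show a + b + (1 - 2 * a) = b + 1 - a by ring]
  have h_left_two : q ^ (3 * a + b - 3) * f2Kernel q (a - 2) (b + 1)
      = q ^ (b + 1 - a) * (1 - q ^ (a - 1)) * (1 - q ^ a) * G := by
    have hpow : q ^ (b + 1 - a)
        = q ^ (3 * a + b - 3) * q ^ (1 - 2 * (a - 1)) * q ^ (1 - 2 * a) := by
      rw [← zpow_add₀ hq0, ← zpow_add₀ hq0]
      congr 1
      ring
    rw [show a - 2 = a - 1 - 1 by ring, f2Kernel_sub_one_left hq0 hq, f2Kernel_sub_one_left hq0 hq,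
      hpow]
    ring
  rw [f2Kernel_sub_one_right hq, h_left_two, h_base]
  linear_combination
    G * one_sub_zpow_mul_one_sub_zpow hq0 a b - (1 - q ^ (a + b)) * h_left

theorem statement14_general {q : ℂ} (hq0 : q ≠ 0) (hq : ¬IsOfFinOrder q) (m : ℤ) {l : ℤ}
    (hl : 0 < l) :
    f2 q m l
      = q ^ l * f2 q (m - 1) l + f2 q (m - 1) (l - 1)
        - q ^ (2 * m - l - 3) * f2 q (m - 3) (l - 1) := by
  have h_left : f2 q (m - 1) l = qPoch q q l.toNat * f2Kernel q (m - l - 1) (2 * l - m + 1) := by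
    rw [f2_eq_qPoch_mul_f2Kernel]
    congr 2 <;> ring
  have h_right : f2 q (m - 1) (l - 1)
      = qPoch q q (l - 1).toNat * f2Kernel q (m - l) (2 * l - m - 1) := by
    rw [f2_eq_qPoch_mul_f2Kernel]
    congr 2 <;> ring
  have h_left_two : f2 q (m - 3) (l - 1)
      = qPoch q q (l - 1).toNat * f2Kernel q (m - l - 2) (2 * l - m + 1) := by
    rw [f2_eq_qPoch_mul_f2Kernel]
    congr 2 <;> ring
  have h_rec := f2Kernel_recursion hq0 hq (m - l) (2 * l - m)
  rw [show m - l + (2 * l - m) = l by ring,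
    show 3 * (m - l) + (2 * l - m) - 3 = 2 * m - l - 3 by ring] at h_rec
  rw [h_left, h_right, h_left_two, f2_eq_qPoch_mul_f2Kernel, qPoch_self_toNat q hl]
  linear_combination qPoch q q (l - 1).toNat * h_rec

/-- For `l < m < 2l`, the recursion
    `f²_{m,l} = q^l f²_{m−1,l} + f²_{m−1,l−1} − q^{2m−l−3} f²_{m−3,l−1}` holds. -/
theorem statement14 (q : ℂ) (hq0 : 0 < ‖q‖) (hq1 : ‖q‖ < 1) :
    ∀ m l : ℤ, l < m → m < 2 * l →
      f2 q m l
        = q ^ l * f2 q (m - 1) l + f2 q (m - 1) (l - 1)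
          - q ^ (2 * m - l - 3) * f2 q (m - 3) (l - 1) := by
  intro m l hlm hml
  exact statement14_general (norm_pos_iff.mp hq0) (fun h => hq1.ne h.norm_eq_one) m (by lia)
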